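/- arXiv:2102.10609 — 5 statements merged into one kernel-verified Lean document; each statement's English description precedes it below -/
import Mathlib

section
/- Let n ≥ 1 and let v : {1,…,n} → ℝ² be a totally nonzero tuple. Then there exist a permutation σ of {1,…,n} and signs ε : {1,…,n} → {1,−1} such that for all i ≠ j, sgn(det(v_i | v_j)) = ε_i·ε_j·sgn(σ(j) − σ(i)). -/
/-- The determinant of the 2×2 matrix with columns `v` and `w`. -/
noncomputable def det2 (v w : ℝ × ℝ) : ℝ := v.1 * w.2 - v.2 * w.1

/-- A tuple `v : Fin n → ℝ²` is totally nonzero if `det (v i | v j) ≠ 0` for all `i ≠ j`. -/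
def TotallyNonzero (n : ℕ) (v : Fin n → ℝ × ℝ) : Prop :=
  ∀ i j : Fin n, i ≠ j → det2 (v i) (v j) ≠ 0

/-!
Changing the sign of some vectors, we may assume that all of them lie in the half-plane of vectors
that are nonnegative in the lexicographic order of `ℝ²`. On such vectors the relation
`0 < det (u | w)` is transitive: if `det (u | w)` and `det (w | z)` were positive and `det (z | u)`
nonnegative, the identity `det (w | z) u + det (z | u) w + det (u | w) z = 0` would exhibit `0` as a
positive vector. So the relation orders the indices strictly and totally, and `σ` lists them in
increasing order.
-/

instance posSMulStrictMono_prodLex {K M N : Type*} [Zero K] [Preorder K] [Preorder M] [Preorder N]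
    [SMul K M] [SMul K N] [PosSMulStrictMono K M] [PosSMulStrictMono K N] :
    PosSMulStrictMono K (M ×ₗ N) where
  smul_lt_smul_of_pos_left c hc x y hxy := by
    rw [Prod.Lex.lt_iff] at hxy ⊢
    rcases hxy with hfst | ⟨hfst, hsnd⟩
    · exact .inl (smul_lt_smul_of_pos_left hfst hc)
    · exact .inr ⟨congrArg (c • ·) hfst, smul_lt_smul_of_pos_left hsnd hc⟩

theorem exists_equiv_fin_lt_iff {α : Type*} [Fintype α] {n : ℕ} (hα : Fintype.card α = n)
    (r : α → α → Prop) [IsStrictTotalOrder α r] :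
    ∃ σ : α ≃ Fin n, ∀ a b, σ a < σ b ↔ r a b := by
  classical
  let _ : LinearOrder α := linearOrderOfSTO r
  let e : α ≃o Fin n := (Fintype.orderIsoFinOfCardEq α hα).symm
  exact ⟨e.toEquiv, fun _ _ => e.lt_iff_lt⟩

theorem sign_mul_of_eq_one_or_neg_one {ε : ℝ} (hε : ε = 1 ∨ ε = -1) (x : ℝ) :
    Real.sign (ε * x) = ε * Real.sign x := by
  rcases hε with rfl | rfl
  · rw [one_mul, one_mul]
  · rw [neg_one_mul, neg_one_mul, Real.sign_neg]

theorem exists_eq_sign_smul_nonneg (R : Type*) {M : Type*} [Ring R] [AddCommGroup M]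
    [LinearOrder M] [IsOrderedAddMonoid M] [Module R M] (x : M) :
    ∃ (ε : R) (y : M), (ε = 1 ∨ ε = -1) ∧ 0 ≤ y ∧ x = ε • y := by
  rcases le_total 0 x with hx | hx
  · exact ⟨1, x, .inl rfl, hx, (one_smul R x).symm⟩
  · exact ⟨-1, -x, .inr rfl, neg_nonneg.2 hx, by rw [neg_one_smul, neg_neg]⟩

theorem det2_self (u : ℝ × ℝ) : det2 u u = 0 := by
  unfold det2
  ring

theorem det2_swap (u w : ℝ × ℝ) : det2 w u = -det2 u w := by
  unfold det2
  ring

theorem det2_zero_left (w : ℝ × ℝ) : det2 0 w = 0 := by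
  simp [det2]

theorem det2_smul_smul (a b : ℝ) (u w : ℝ × ℝ) : det2 (a • u) (b • w) = a * b * det2 u w := by
  simp only [det2, Prod.smul_fst, Prod.smul_snd, smul_eq_mul]
  ring

theorem det2_smul_add_cyclic (u w z : ℝ × ℝ) :
    det2 w z • u + det2 z u • w + det2 u w • z = 0 := by
  ext
  all_goals
    simp only [det2, Prod.fst_add, Prod.snd_add, Prod.smul_fst, Prod.smul_snd, smul_eq_mul,
      Prod.fst_zero, Prod.snd_zero]
    ring

theorem det2_pos_trans {u w z : ℝ × ℝ} (hu : 0 ≤ toLex u) (hw : 0 ≤ toLex w) (hz : 0 ≤ toLex z)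
    (huw : 0 < det2 u w) (hwz : 0 < det2 w z) : 0 < det2 u z := by
  by_contra! huz
  have hzu : 0 ≤ det2 z u := by rwa [det2_swap, neg_nonneg]
  have hu_pos : 0 < toLex u := by
    refine hu.lt_of_ne' fun hu_zero => huw.ne' ?_
    rw [toLex_eq_zero.1 hu_zero, det2_zero_left]
  have hpos : 0 < det2 w z • toLex u + det2 z u • toLex w + det2 u w • toLex z :=
    add_pos_of_pos_of_nonneg
      (add_pos_of_pos_of_nonneg (smul_pos hwz hu_pos) (smul_nonneg hzu hw))
      (smul_nonneg huw.le hz)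
  exact hpos.ne' (congrArg toLex (det2_smul_add_cyclic u w z))

theorem TotallyNonzero.isStrictTotalOrder_det2_pos {n : ℕ} {u : Fin n → ℝ × ℝ}
    (hu : TotallyNonzero n u) (hu_nonneg : ∀ i, 0 ≤ toLex (u i)) :
    IsStrictTotalOrder (Fin n) fun i j => 0 < det2 (u i) (u j) where
  trichotomous i j hij hji := by
    by_contra hne
    rw [det2_swap, neg_pos] at hji
    exact hu i j hne (le_antisymm (not_lt.1 hij) (not_lt.1 hji))
  irrefl i := (det2_self (u i)).not_gt
  trans i j k := det2_pos_trans (hu_nonneg i) (hu_nonneg j) (hu_nonneg k)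

theorem TotallyNonzero.exists_perm_sign_det2 {n : ℕ} {u : Fin n → ℝ × ℝ}
    (hu : TotallyNonzero n u) (hu_nonneg : ∀ i, 0 ≤ toLex (u i)) :
    ∃ σ : Equiv.Perm (Fin n), ∀ i j,
      Real.sign (det2 (u i) (u j)) = Real.sign (((σ j : ℕ) : ℝ) - ((σ i : ℕ) : ℝ)) := by
  have := hu.isStrictTotalOrder_det2_pos hu_nonneg
  obtain ⟨σ, hσ⟩ := exists_equiv_fin_lt_iff (Fintype.card_fin n)
    fun i j => 0 < det2 (u i) (u j)
  have sign_of_lt {i j : Fin n} (hij : σ i < σ j) :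
      Real.sign (det2 (u i) (u j)) = Real.sign (((σ j : ℕ) : ℝ) - ((σ i : ℕ) : ℝ)) := by
    have hcast : ((σ i : ℕ) : ℝ) < ((σ j : ℕ) : ℝ) := Nat.cast_lt.2 hij
    rw [Real.sign_of_pos ((hσ i j).1 hij), Real.sign_of_pos (sub_pos.2 hcast)]
  refine ⟨σ, fun i j => ?_⟩
  rcases lt_trichotomy (σ i) (σ j) with hij | hij | hji
  · exact sign_of_lt hij
  · rw [σ.injective hij, det2_self, sub_self]
  · rw [det2_swap, Real.sign_neg, sign_of_lt hji, ← Real.sign_neg, neg_sub]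

/-- every totally nonzero tuple in the plane has sign pattern
`sgn (det (v i | v j)) = ε i · ε j · sgn (σ j - σ i)` for some permutation `σ` and signs `ε`. -/
theorem stmt_1 (n : ℕ) (hn : 1 ≤ n) (v : Fin n → ℝ × ℝ) (hv : TotallyNonzero n v) :
    ∃ σ : Equiv.Perm (Fin n), ∃ ε : Fin n → ℝ, (∀ i, ε i = 1 ∨ ε i = -1) ∧
      ∀ i j : Fin n, i ≠ j →
        Real.sign (det2 (v i) (v j)) =
          ε i * ε j * Real.sign (((σ j : ℕ) : ℝ) - ((σ i : ℕ) : ℝ)) := by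
  choose ε u hε hu_nonneg hvu using fun i => exists_eq_sign_smul_nonneg ℝ (toLex (v i))
  have hdet (i j : Fin n) :
      det2 (v i) (v j) = ε i * ε j * det2 (ofLex (u i)) (ofLex (u j)) := by
    rw [← det2_smul_smul, ← ofLex_smul, ← ofLex_smul, ← hvu, ← hvu, ofLex_toLex, ofLex_toLex]
  have hu : TotallyNonzero n fun i => ofLex (u i) :=
    fun i j hij => right_ne_zero_of_mul (hdet i j ▸ hv i j hij)
  obtain ⟨σ, hσ⟩ := hu.exists_perm_sign_det2 hu_nonneg
  refine ⟨σ, ε, hε, fun i j _ => ?_⟩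
  rw [hdet, mul_assoc, sign_mul_of_eq_one_or_neg_one (hε i),
    sign_mul_of_eq_one_or_neg_one (hε j), hσ, mul_assoc]
end

section
/- Let n ≥ 1 and let v : {1,…,n} → ℝ² be a totally nonzero tuple. Then there exist a permutation σ of {1,…,n} and signs ε : {1,…,n} → {1,−1} such that det(ε_i·v_{σ(i)} | ε_j·v_{σ(j)}) > 0 for all i < j. (Consequently, the group (ℝ*)^n ⋊ S_n acting by rescaling and permuting columns acts transitively on the set of strata of the totally nonzero Grassmannian Gr^{tnz}_{2n}(ℝ).) -/
/-!
Changing the sign of a vector does not change the line it spans, so every vector may be moved into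
the half-open upper half-plane of vectors of angle in `[0, π)`. There `det (a | b)` is nonnegative
as soon as the angle of `a` is at most that of `b`, so it remains to sort the vectors by angle, or,
avoiding trigonometry, by minus the cotangent of the angle.
-/

section

variable {R : Type*} [CommRing R]

/-- The determinant of the 2×2 matrix with columns `a` and `b`, as `det2` but over any commutative
ring. -/
def columnDet (a b : R × R) : R :=
  !![a.1, b.1; a.2, b.2].det

theorem columnDet_eq (a b : R × R) :
    columnDet a b = a.1 * b.2 - b.1 * a.2 :=
  Matrix.det_fin_two_of _ _ _ _

theorem columnDet_smul_smul (s t : R) (a b : R × R) :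
    columnDet (s • a) (t • b) = s * t * columnDet a b := by
  simp only [columnDet_eq, Prod.smul_fst, Prod.smul_snd, smul_eq_mul]
  ring

theorem abs_columnDet_sign_smul [LinearOrder R] [IsOrderedRing R] {s t : R}
    (hs : s = 1 ∨ s = -1) (ht : t = 1 ∨ t = -1) (a b : R × R) :
    |columnDet (s • a) (t • b)| = |columnDet a b| := by
  rw [columnDet_smul_smul, abs_mul, abs_mul, (abs_eq zero_le_one).mpr hs,
    (abs_eq zero_le_one).mpr ht, one_mul, one_mul]

end

theorem det2_eq_columnDet (a b : ℝ × ℝ) : det2 a b = columnDet a b := by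
  rw [det2, columnDet_eq, mul_comm a.2]

/-- The half-open upper half-plane: the open upper half-plane together with the nonnegative
horizontal half-axis. The zero vector is included, so that the half-plane and its opposite cover the
whole plane. -/
def halfOpenHalfPlane (R : Type*) [Zero R] [LinearOrder R] : Set (R × R) :=
  {a | 0 < a.2 ∨ a.2 = 0 ∧ 0 ≤ a.1}

theorem exists_sign_smul_mem_halfOpenHalfPlane {R : Type*} [Ring R] [LinearOrder R]
    [IsOrderedAddMonoid R] (a : R × R) :
    ∃ s : R, (s = 1 ∨ s = -1) ∧ s • a ∈ halfOpenHalfPlane R := by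
  suffices a ∈ halfOpenHalfPlane R ∨ -a ∈ halfOpenHalfPlane R by
    rcases this with h | h
    · exact ⟨1, .inl rfl, by rwa [one_smul]⟩
    · exact ⟨-1, .inr rfl, by rwa [neg_one_smul]⟩
  rcases lt_trichotomy a.2 0 with h | h | h
  · exact .inr (.inl (neg_pos.mpr h))
  · exact (le_total 0 a.1).imp (fun h₁ => .inr ⟨h, h₁⟩)
      (fun h₁ => .inr ⟨neg_eq_zero.mpr h, neg_nonneg.mpr h₁⟩)
  · exact .inl (.inl h)

section

variable {K : Type*} [Field K] [LinearOrder K]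

/-- Minus the cotangent of the angle of `a`, which increases with the angle on `(0, π)`. Horizontal
vectors, whose cotangent is infinite, are sent to `⊥`, which puts the angle `0` first. -/
def negCot (a : K × K) : WithBot K :=
  if a.2 = 0 then ⊥ else ↑(-(a.1 / a.2))

variable [IsStrictOrderedRing K]

theorem columnDet_nonneg_of_negCot_le {a b : K × K} (ha : a ∈ halfOpenHalfPlane K)
    (hb : b ∈ halfOpenHalfPlane K) (hab : negCot a ≤ negCot b) : 0 ≤ columnDet a b := by
  rw [columnDet_eq, sub_nonneg]
  rcases ha with ha | ⟨ha₂, ha₁⟩ <;> rcases hb with hb | ⟨hb₂, -⟩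
  · rwa [negCot, negCot, if_neg ha.ne', if_neg hb.ne', WithBot.coe_le_coe, neg_le_neg_iff,
      div_le_div_iff₀ hb ha] at hab
  · simp [negCot, ha.ne', hb₂] at hab
  · simpa only [ha₂, mul_zero] using mul_nonneg ha₁ hb.le
  · simp only [ha₂, hb₂, mul_zero, le_refl]

theorem exists_perm_columnDet_nonneg {n : ℕ} {u : Fin n → K × K}
    (hu : ∀ i, u i ∈ halfOpenHalfPlane K) :
    ∃ σ : Equiv.Perm (Fin n), ∀ i j, i ≤ j → 0 ≤ columnDet (u (σ i)) (u (σ j)) :=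
  ⟨Tuple.sort (negCot ∘ u), fun _ _ hij =>
    columnDet_nonneg_of_negCot_le (hu _) (hu _) (Tuple.monotone_sort (negCot ∘ u) hij)⟩

theorem stmt_5_general {n : ℕ} (v : Fin n → K × K) :
    ∃ σ : Equiv.Perm (Fin n), ∃ ε : Fin n → K, (∀ i, ε i = 1 ∨ ε i = -1) ∧
      ∀ i j : Fin n, i < j →
        columnDet (ε i • v (σ i)) (ε j • v (σ j)) = |columnDet (v (σ i)) (v (σ j))| := by
  choose s hs hsv using fun i => exists_sign_smul_mem_halfOpenHalfPlane (v i)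
  obtain ⟨σ, hσ⟩ := exists_perm_columnDet_nonneg hsv
  refine ⟨σ, s ∘ σ, fun i => hs (σ i), fun i j hij => ?_⟩
  rw [← abs_columnDet_sign_smul (hs (σ i)) (hs (σ j))]
  exact (abs_of_nonneg (hσ i j hij.le)).symm

end

/-- for any totally nonzero tuple `v : Fin n → ℝ²` there are a permutation `σ`
and signs `ε` such that `det (ε i • v (σ i) | ε j • v (σ j)) > 0` for all `i < j`. -/
theorem stmt_5 (n : ℕ) (hn : 1 ≤ n) (v : Fin n → ℝ × ℝ) (hv : TotallyNonzero n v) :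
    ∃ σ : Equiv.Perm (Fin n), ∃ ε : Fin n → ℝ, (∀ i, ε i = 1 ∨ ε i = -1) ∧
      ∀ i j : Fin n, i < j → 0 < det2 (ε i • v (σ i)) (ε j • v (σ j)) := by
  obtain ⟨σ, ε, hε, hdet⟩ := stmt_5_general v
  refine ⟨σ, ε, hε, fun i j hij => ?_⟩
  rw [det2_eq_columnDet, hdet i j hij, abs_pos, ← det2_eq_columnDet]
  exact hv _ _ (σ.injective.ne hij.ne)
end

section
/- Let n ≥ m ≥ 2 be integers and let M, N ∈ Mat^{tnz}_{mn}(ℝ) have columns v_1,…,v_n and w_1,…,w_n respectively, so that S = {v_1,…,v_n} and T = {w_1,…,w_n} are generic point arrangements of cardinality n in ℝ^m. Then S and T are isomorphic generic point arrangements if and only if there exist a permutation σ of {1,…,n} and a sign ε ∈ {1,−1} such that for every m-element subset I ⊆ {1,…,n}, sgn(Δ_I(M)) = ε·sgn(Δ_I(N_σ)), where N_σ denotes the m×n matrix whose i-th column is w_{σ(i)}. -/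
/-- The maximal minor `Δ_I(M)`: the determinant of the `m × m` submatrix of `M` on the column
set `I` (columns taken in increasing order). -/
noncomputable def maxMinor {m n : ℕ} (M : Matrix (Fin m) (Fin n) ℝ)
    (I : Finset (Fin n)) (hI : I.card = m) : ℝ :=
  (M.submatrix id (fun k => ((I.orderIsoOfFin hI k : I) : Fin n))).det

/-- `Mat^{tnz}_{mn}(ℝ)`: all maximal minors are nonzero. -/
def TNZMat {m n : ℕ} (M : Matrix (Fin m) (Fin n) ℝ) : Prop :=
  ∀ (I : Finset (Fin n)) (hI : I.card = m), maxMinor M I hI ≠ 0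

/-- The set of columns of `M`, as points of `ℝ^m`. -/
def columnSet {m n : ℕ} (M : Matrix (Fin m) (Fin n) ℝ) : Set (Fin m → ℝ) :=
  Set.range fun i => fun k => M k i

/-- Isomorphism of generic point arrangements `S, T ⊆ ℝ^m`: a bijection `f : S → T` such that
for every `(m+1)`-element subset `{c 0, …, c m}` of `S`, whenever
`c m = Σ_j a j • c j` and `f (c m) = Σ_j b j • f (c j)`, one has `a j · b j > 0` for all `j`. -/
def GenericIso (m : ℕ) (S T : Set (Fin m → ℝ)) : Prop :=
  ∃ f : (Fin m → ℝ) → (Fin m → ℝ), Set.BijOn f S T ∧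
    ∀ c : Fin (m + 1) → (Fin m → ℝ), Function.Injective c → (∀ k, c k ∈ S) →
      ∀ a b : Fin m → ℝ,
        c (Fin.last m) = ∑ j : Fin m, a j • c j.castSucc →
        f (c (Fin.last m)) = ∑ j : Fin m, b j • f (c j.castSucc) →
        ∀ j : Fin m, 0 < a j * b j

/-!
The sign of the product `[g]_M [g]_N` of corresponding maximal minors does not depend on the order
in which the columns `g` are listed. By Cramer's rule, exchanging the `j`-th column of a basis for
another column multiplies the two minors by the `j`-th coefficients `a_j`, `b_j` of that column in
the basis, so the sign of the product survives every exchange if and only if all `a_j b_j` are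
positive. As any two bases are connected by exchanges and reorderings, this says that the sign is
the same for all bases; the constant value is `ε`.
-/

open Function

section SetValue

variable {κ ι : Type*} [DecidableEq κ] [DecidableEq ι]

theorem coe_setValue_of_notMem_range {g : κ ↪ ι} {i : ι} (hi : i ∉ Set.range g) (j : κ) :
    ⇑(g.setValue j i) = update g j i := by
  funext l
  obtain rfl | hl := eq_or_ne l j
  · simp
  · rw [Embedding.setValue_eq_of_ne hl fun h => hi ⟨l, h⟩, update_of_ne hl]

theorem coe_setValue_apply_self (g : κ ↪ ι) (j l : κ) :
    ⇑(g.setValue j (g l)) = g ∘ Equiv.swap j l := by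
  funext x
  simp only [Embedding.setValue, Embedding.coeFn_mk, comp_apply, Equiv.swap_apply_def,
    g.injective.eq_iff]
  split_ifs <;> rfl

theorem eq_of_forall_setValue_eq [Finite κ] {α : Type*} {Q : (κ ↪ ι) → α}
    (hQ : ∀ g j i, Q (g.setValue j i) = Q g) (g h : κ ↪ ι) : Q g = Q h := by
  cases nonempty_fintype κ
  -- Prescribing the values of `h` one by one keeps the earlier ones, since `h` is injective.
  have exists_agreeing_on (s : Finset κ) : ∃ g', Q g' = Q g ∧ ∀ k ∈ s, g' k = h k := by
    induction s using Finset.induction_on with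
    | empty => exact ⟨g, rfl, by simp⟩
    | insert j s _ ih =>
      obtain ⟨g', hg', hs⟩ := ih
      refine ⟨g'.setValue j (h j), (hQ _ _ _).trans hg', fun k hk => ?_⟩
      obtain rfl | hkj := eq_or_ne k j
      · exact Embedding.setValue_eq ..
      · have hk' := hs k (Finset.mem_of_mem_insert_of_ne hk hkj)
        rw [Embedding.setValue_eq_of_ne hkj (hk' ▸ h.injective.ne hkj), hk']
  obtain ⟨g', hg', hs⟩ := exists_agreeing_on Finset.univ
  rw [← hg', Embedding.ext fun k => hs k (Finset.mem_univ k)]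

end SetValue

section Bracket

variable {κ ι R : Type*} [Fintype κ] [DecidableEq κ] [CommRing R]

/-- The bracket `[g]_M` of a configuration of vectors, given as the columns of `M`: the determinant
of the columns listed by `g`, in that order. Unlike a maximal minor it is alternating in `g`. -/
def bracket (M : Matrix κ ι R) (g : κ → ι) : R :=
  (M.submatrix id g).det

theorem bracket_comp_perm (M : Matrix κ ι R) (g : κ → ι) (τ : Equiv.Perm κ) :
    bracket M (g ∘ τ) = ((Equiv.Perm.sign τ : ℤ) : R) * bracket M g :=
  Matrix.det_permute' τ (M.submatrix id g)

theorem bracket_update_of_col_eq_sum {M : Matrix κ ι R} {g : κ → ι} {i : ι} {a : κ → R}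
    (ha : M.col i = ∑ j, a j • M.col (g j)) (j : κ) :
    bracket M (update g j i) = a j * bracket M g := by
  have exchanged : M.submatrix id (update g j i) =
      (M.submatrix id g).updateCol j fun k => ∑ l, a l • M.submatrix id g k l := by
    ext k l
    obtain rfl | hl := eq_or_ne l j
    · simpa using congrFun ha k
    · simp [hl]
  rw [bracket, exchanged, Matrix.det_updateCol_sum, smul_eq_mul, bracket]

theorem exists_eq_sum_smul_col {M : Matrix κ ι R} {g : κ → ι} (hg : IsUnit (bracket M g))
    (v : κ → R) : ∃ a : κ → R, v = ∑ j, a j • M.col (g j) := by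
  obtain ⟨a, rfl⟩ := Matrix.mulVec_surjective_iff_isUnit.mpr
    ((Matrix.isUnit_iff_isUnit_det _).mpr hg) v
  exact ⟨a, by simp [Matrix.mulVec_eq_sum, funext_iff, mul_comm]⟩

theorem col_injective_of_bracket_ne_zero [Nontrivial κ] [Nonempty (κ ↪ ι)] {M : Matrix κ ι R}
    (hM : ∀ g : κ ↪ ι, bracket M g ≠ 0) : Injective M.col := by
  classical
  intro i i' hcol
  by_contra hne
  obtain ⟨j, j', hj⟩ := exists_pair_ne κ
  let g : κ ↪ ι := (Classical.arbitrary (κ ↪ ι)).setValue j i |>.setValue j' i'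
  have hgj : g j = i := by
    simp [g, Embedding.setValue_eq_of_ne hj, hne]
  have hgj' : g j' = i' := Embedding.setValue_eq ..
  refine hM g (Matrix.det_zero_of_column_eq hj fun k => ?_)
  simpa [hgj, hgj'] using congrFun hcol k

end Bracket

section RelOrientation

variable {κ ι R : Type*} [Fintype κ] [DecidableEq κ]
  [CommRing R] [LinearOrder R] [IsStrictOrderedRing R]

/-- The orientation of the columns `g` of `N` relative to the same columns of `M`: `1` or `-1` when
both brackets are nonzero, according to whether their signs are equal, and `0` otherwise. -/
def relOrientation (M N : Matrix κ ι R) (g : κ → ι) : SignType :=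
  SignType.sign (bracket M g * bracket N g)

/-- Corresponding expansions of a further column in a basis of columns of `M` and in the same
columns of `N` have coefficients of equal, nonzero signs. -/
def CoefficientSignsAgree (M N : Matrix κ ι R) : Prop :=
  ∀ (g : κ ↪ ι) (i : ι), i ∉ Set.range g → ∀ a b : κ → R,
    M.col i = ∑ j, a j • M.col (g j) → N.col i = ∑ j, b j • N.col (g j) → ∀ j, 0 < a j * b j

theorem relOrientation_comp_perm (M N : Matrix κ ι R) (g : κ → ι) (τ : Equiv.Perm κ) :
    relOrientation M N (g ∘ τ) = relOrientation M N g := by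
  have sign_sq : ((Equiv.Perm.sign τ : ℤ) : R) * ((Equiv.Perm.sign τ : ℤ) : R) = 1 := by
    exact_mod_cast Int.units_coe_mul_self _
  rw [relOrientation, bracket_comp_perm, bracket_comp_perm, mul_mul_mul_comm, sign_sq, one_mul,
    relOrientation]

theorem relOrientation_update {M N : Matrix κ ι R} {g : κ → ι} {i : ι} {a b : κ → R}
    (ha : M.col i = ∑ j, a j • M.col (g j)) (hb : N.col i = ∑ j, b j • N.col (g j)) (j : κ) :
    relOrientation M N (update g j i) = SignType.sign (a j * b j) * relOrientation M N g := by
  rw [relOrientation, bracket_update_of_col_eq_sum ha, bracket_update_of_col_eq_sum hb,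
    mul_mul_mul_comm, sign_mul, relOrientation]

theorem relOrientation_update_eq_iff {M N : Matrix κ ι R} {g : κ → ι} {i : ι} {a b : κ → R}
    (hg : relOrientation M N g ≠ 0) (ha : M.col i = ∑ j, a j • M.col (g j))
    (hb : N.col i = ∑ j, b j • N.col (g j)) (j : κ) :
    relOrientation M N (update g j i) = relOrientation M N g ↔ 0 < a j * b j := by
  rw [relOrientation_update ha hb, mul_eq_right₀ hg, sign_eq_one_iff]

theorem coefficientSignsAgree_iff_relOrientation_eq {K : Type*} [Field K] [LinearOrder K]
    [IsStrictOrderedRing K] {M N : Matrix κ ι K} (hM : ∀ g : κ ↪ ι, bracket M g ≠ 0)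
    (hN : ∀ g : κ ↪ ι, bracket N g ≠ 0) :
    CoefficientSignsAgree M N ↔
      ∀ g h : κ ↪ ι, relOrientation M N g = relOrientation M N h := by
  classical
  have relOrientation_ne_zero (g : κ ↪ ι) : relOrientation M N g ≠ 0 :=
    sign_ne_zero.mpr (mul_ne_zero (hM g) (hN g))
  refine ⟨fun hMN => eq_of_forall_setValue_eq (Q := fun g => relOrientation M N g)
    fun g j i => ?_, fun hconst g i hi a b ha hb j => ?_⟩
  · by_cases hi : i ∈ Set.range g
    · obtain ⟨l, rfl⟩ := hi
      rw [coe_setValue_apply_self g, relOrientation_comp_perm]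
    · obtain ⟨a, ha⟩ := exists_eq_sum_smul_col (hM g).isUnit (M.col i)
      obtain ⟨b, hb⟩ := exists_eq_sum_smul_col (hN g).isUnit (N.col i)
      rw [coe_setValue_of_notMem_range hi,
        relOrientation_update_eq_iff (relOrientation_ne_zero g) ha hb]
      exact hMN g i hi a b ha hb j
  · rw [← relOrientation_update_eq_iff (relOrientation_ne_zero g) ha hb,
      ← coe_setValue_of_notMem_range hi]
    exact hconst _ _

end RelOrientation

section MaxMinor

variable {m n : ℕ}

theorem orderEmbOfFin_map_eq_comp_sort {α : Type*} [LinearOrder α] (g : Fin m ↪ α) :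
    ⇑((Finset.univ.map g).orderEmbOfFin (by simp)) = g ∘ Tuple.sort g :=
  (Finset.orderEmbOfFin_unique _ (by simp) ((Tuple.monotone_sort g).strictMono_of_injective
    (g.injective.comp (Tuple.sort g).injective))).symm

theorem maxMinor_eq_bracket (M : Matrix (Fin m) (Fin n) ℝ) (I : Finset (Fin n))
    (hI : I.card = m) : maxMinor M I hI = bracket M (I.orderEmbOfFin hI) :=
  rfl

theorem tnzMat_iff_bracket_ne_zero {M : Matrix (Fin m) (Fin n) ℝ} :
    TNZMat M ↔ ∀ g : Fin m ↪ Fin n, bracket M g ≠ 0 := by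
  refine ⟨fun hM g hg => ?_, fun hM I hI => hM (I.orderEmbOfFin hI).toEmbedding⟩
  refine hM (Finset.univ.map g) (by simp) ?_
  rw [maxMinor_eq_bracket, orderEmbOfFin_map_eq_comp_sort, bracket_comp_perm, hg, mul_zero]

theorem TNZMat.submatrix_perm {N : Matrix (Fin m) (Fin n) ℝ} (hN : TNZMat N)
    (σ : Equiv.Perm (Fin n)) : TNZMat (N.submatrix id σ) :=
  tnzMat_iff_bracket_ne_zero.mpr fun g =>
    tnzMat_iff_bracket_ne_zero.mp hN (g.trans σ.toEmbedding)

theorem TNZMat.col_injective {M : Matrix (Fin m) (Fin n) ℝ} (hM : TNZMat M) (hm : 2 ≤ m)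
    (hmn : m ≤ n) : Injective M.col :=
  have : Nontrivial (Fin m) := Fin.nontrivial_iff_two_le.mpr hm
  have : Nonempty (Fin m ↪ Fin n) := ⟨Fin.castLEEmb hmn⟩
  col_injective_of_bracket_ne_zero (tnzMat_iff_bracket_ne_zero.mp hM)

theorem forall_relOrientation_eq_iff {M N : Matrix (Fin m) (Fin n) ℝ} {s : SignType} :
    (∀ g : Fin m ↪ Fin n, relOrientation M N g = s) ↔
      ∀ (I : Finset (Fin n)) (hI : I.card = m), relOrientation M N (I.orderEmbOfFin hI) = s := by
  refine ⟨fun H I hI => H (I.orderEmbOfFin hI).toEmbedding, fun H g => ?_⟩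
  rw [← relOrientation_comp_perm M N g (Tuple.sort g), ← orderEmbOfFin_map_eq_comp_sort]
  exact H _ _

theorem real_sign_eq_mul_real_sign_iff {x y ε : ℝ} (hy : y ≠ 0) (hε : ε = 1 ∨ ε = -1) :
    Real.sign x = ε * Real.sign y ↔ SignType.sign (x * y) = SignType.sign ε := by
  have zero_ne_neg_one : (0 : SignType) ≠ -1 := by decide
  rcases hε with rfl | rfl <;> rcases lt_trichotomy x 0 with hx | hx | hx <;>
    rcases hy.lt_or_gt with hy | hy <;>
    norm_num [Real.sign_of_pos, Real.sign_of_neg, sign_mul, zero_ne_neg_one, hx, hy]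

theorem exists_real_sign_maxMinor_eq_iff {M N : Matrix (Fin m) (Fin n) ℝ} (hM : TNZMat M)
    (hN : TNZMat N) :
    (∃ ε : ℝ, (ε = 1 ∨ ε = -1) ∧ ∀ (I : Finset (Fin n)) (hI : I.card = m),
        Real.sign (maxMinor M I hI) = ε * Real.sign (maxMinor N I hI)) ↔
      ∀ g h : Fin m ↪ Fin n, relOrientation M N g = relOrientation M N h := by
  have iff_relOrientation {ε : ℝ} (hε : ε = 1 ∨ ε = -1) :
      (∀ (I : Finset (Fin n)) (hI : I.card = m),
        Real.sign (maxMinor M I hI) = ε * Real.sign (maxMinor N I hI)) ↔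
      ∀ g : Fin m ↪ Fin n, relOrientation M N g = SignType.sign ε := by
    rw [forall_relOrientation_eq_iff]
    exact forall₂_congr fun I hI => real_sign_eq_mul_real_sign_iff (hN I hI) hε
  constructor
  · rintro ⟨ε, hε, H⟩ g h
    rw [(iff_relOrientation hε).mp H g, (iff_relOrientation hε).mp H h]
  · intro H
    obtain _ | ⟨⟨g⟩⟩ := isEmpty_or_nonempty (Fin m ↪ Fin n)
    · exact ⟨1, .inl rfl, (iff_relOrientation (.inl rfl)).mpr isEmptyElim⟩
    have hg : bracket M g * bracket N g ≠ 0 :=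
      mul_ne_zero (tnzMat_iff_bracket_ne_zero.mp hM g) (tnzMat_iff_bracket_ne_zero.mp hN g)
    obtain hneg | hpos := hg.lt_or_gt
    · refine ⟨-1, .inr rfl, (iff_relOrientation (.inr rfl)).mpr fun h => (H h g).trans ?_⟩
      rw [relOrientation, sign_neg hneg, sign_neg neg_one_lt_zero]
    · refine ⟨1, .inl rfl, (iff_relOrientation (.inl rfl)).mpr fun h => (H h g).trans ?_⟩
      rw [relOrientation, sign_pos hpos, sign_one]

end MaxMinor

section GenericIso

theorem exists_equiv_of_bijOn_range {ι ι' α β : Type*} {u : ι → α} {v : ι' → β} {f : α → β}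
    (hu : Injective u) (hv : Injective v) (hf : Set.BijOn f (Set.range u) (Set.range v)) :
    ∃ σ : ι ≃ ι', ∀ i, f (u i) = v (σ i) :=
  ⟨(Equiv.ofInjective u hu).trans (hf.equiv f) |>.trans (Equiv.ofInjective v hv).symm,
    fun i => (Equiv.apply_ofInjective_symm hv ⟨f (u i), hf.mapsTo ⟨i, rfl⟩⟩).symm⟩

theorem exists_bijOn_range_of_equiv {ι ι' α β : Type*} [Nonempty β] {u : ι → α} {v : ι' → β}
    (hu : Injective u) (hv : Injective v) (σ : ι ≃ ι') :
    ∃ f : α → β, Set.BijOn f (Set.range u) (Set.range v) ∧ ∀ i, f (u i) = v (σ i) := by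
  have hf : ∀ i, extend u (v ∘ σ) (fun _ => Classical.arbitrary β) (u i) = v (σ i) :=
    hu.extend_apply _ _
  refine ⟨_, ⟨?_, ?_, ?_⟩, hf⟩
  · rintro _ ⟨i, rfl⟩
    exact ⟨σ i, (hf i).symm⟩
  · rintro _ ⟨i, rfl⟩ _ ⟨j, rfl⟩ hij
    rw [hf, hf] at hij
    rw [σ.injective (hv hij)]
  · rintro _ ⟨i, rfl⟩
    exact ⟨u (σ.symm i), ⟨_, rfl⟩, by rw [hf, σ.apply_symm_apply]⟩

variable {m n : ℕ}

theorem coefficientSignsAgree_iff_forall_mem_columnSet {M N : Matrix (Fin m) (Fin n) ℝ}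
    {f : (Fin m → ℝ) → Fin m → ℝ} (hM : Injective M.col) (hf : ∀ i, f (M.col i) = N.col i) :
    CoefficientSignsAgree M N ↔
      ∀ c : Fin (m + 1) → (Fin m → ℝ), Injective c → (∀ k, c k ∈ columnSet M) →
        ∀ a b : Fin m → ℝ,
          c (Fin.last m) = ∑ j : Fin m, a j • c j.castSucc →
          f (c (Fin.last m)) = ∑ j : Fin m, b j • f (c j.castSucc) →
          ∀ j : Fin m, 0 < a j * b j := by
  constructor
  · intro hMN c hc hcM a b ha hb
    choose e he using hcM
    obtain rfl : M.col ∘ e = c := funext he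
    have he_inj : Injective e := hc.of_comp
    simp only [comp_apply, hf] at hb
    refine hMN (Fin.castSuccEmb.trans ⟨e, he_inj⟩) (e (Fin.last m)) ?_ a b ha hb
    rintro ⟨j, hj⟩
    exact (Fin.castSucc_lt_last j).ne (he_inj hj)
  · intro H g i hi a b ha hb
    refine H (M.col ∘ Fin.snoc g i) (hM.comp (Fin.snoc_injective_of_injective g.injective hi))
      (fun k => Set.mem_range_self _) a b ?_ ?_
    · simpa using ha
    · simpa [hf] using hb

theorem genericIso_columnSet_iff {M N : Matrix (Fin m) (Fin n) ℝ} (hM : Injective M.col)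
    (hN : Injective N.col) :
    GenericIso m (columnSet M) (columnSet N) ↔
      ∃ σ : Equiv.Perm (Fin n), CoefficientSignsAgree M (N.submatrix id σ) := by
  constructor
  · rintro ⟨f, hf, H⟩
    obtain ⟨σ, hσ⟩ := exists_equiv_of_bijOn_range hM hN hf
    exact ⟨σ, (coefficientSignsAgree_iff_forall_mem_columnSet hM hσ).mpr H⟩
  · rintro ⟨σ, hMN⟩
    obtain ⟨f, hf, hσ⟩ := exists_bijOn_range_of_equiv hM hN σ
    exact ⟨f, hf, (coefficientSignsAgree_iff_forall_mem_columnSet hM hσ).mp hMN⟩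

end GenericIso

/-- for `M, N ∈ Mat^{tnz}_{mn}(ℝ)` with `n ≥ m ≥ 2`, the column arrangements of
`M` and `N` are isomorphic generic point arrangements iff there are a permutation `σ` of the
columns and a global sign `ε` such that all maximal minors of `M` and of `N_σ` have matching
signs up to `ε`. -/
theorem stmt_6 (m n : ℕ) (hm : 2 ≤ m) (hmn : m ≤ n)
    (M N : Matrix (Fin m) (Fin n) ℝ) (hM : TNZMat M) (hN : TNZMat N) :
    GenericIso m (columnSet M) (columnSet N) ↔
      ∃ σ : Equiv.Perm (Fin n), ∃ ε : ℝ, (ε = 1 ∨ ε = -1) ∧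
        ∀ (I : Finset (Fin n)) (hI : I.card = m),
          Real.sign (maxMinor M I hI) =
            ε * Real.sign (maxMinor (Matrix.of fun k i => N k (σ i)) I hI) := by
  rw [genericIso_columnSet_iff (hM.col_injective hm hmn) (hN.col_injective hm hmn)]
  refine exists_congr fun σ => ?_
  have hNσ : TNZMat (N.submatrix id σ) := hN.submatrix_perm σ
  exact (coefficientSignsAgree_iff_relOrientation_eq (tnzMat_iff_bracket_ne_zero.mp hM)
    (tnzMat_iff_bracket_ne_zero.mp hNσ)).trans (exists_real_sign_maxMinor_eq_iff hM hNσ).symm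
end

section
/- Let n ≥ m ≥ 2 be integers and let M, N ∈ Mat^{tnz}_{mn}(ℝ) have columns v_1,…,v_n and w_1,…,w_n respectively, so that S = {±v_1,…,±v_n} and T = {±w_1,…,±w_n} are antipodal point arrangements of cardinality 2n in ℝ^m. Then S and T are isomorphic antipodal point arrangements if and only if there exist a permutation σ of {1,…,n}, signs ε : {1,…,n} → {1,−1}, and a sign δ ∈ {1,−1} such that for every m-element subset I ⊆ {1,…,n}, sgn(Δ_I(M)) = δ·sgn(Δ_I(N')), where N' denotes the m×n matrix whose i-th column is ε_i·w_{σ(i)}. -/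
/-- The antipodal point arrangement `{±v_1, …, ±v_n}` associated to the columns of `M`. -/
def antipodalSet {m n : ℕ} (M : Matrix (Fin m) (Fin n) ℝ) : Set (Fin m → ℝ) :=
  (Set.range fun i => fun k => M k i) ∪ (Set.range fun i => fun k => -M k i)

/-- Isomorphism of antipodal point arrangements `S, T ⊆ ℝ^m`: a bijection `f : S → T` with
`f (-v) = -f v`, such that for every `(m+1)`-element subset `{c 0, …, c m}` of `S` containing
no antipodal pair, whenever `c m = Σ_j a j • c j` and `f (c m) = Σ_j b j • f (c j)`, one has
`(∀ j, a j > 0) ↔ (∀ j, b j > 0)`. -/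
def AntipodalIso (m : ℕ) (S T : Set (Fin m → ℝ)) : Prop :=
  ∃ f : (Fin m → ℝ) → (Fin m → ℝ), Set.BijOn f S T ∧
    (∀ v ∈ S, f (-v) = -f v) ∧
    ∀ c : Fin (m + 1) → (Fin m → ℝ), Function.Injective c → (∀ k, c k ∈ S) →
      (∀ k l, c k ≠ -c l) →
      ∀ a b : Fin m → ℝ,
        c (Fin.last m) = ∑ j : Fin m, a j • c j.castSucc →
        f (c (Fin.last m)) = ∑ j : Fin m, b j • f (c j.castSucc) →
        ((∀ j, 0 < a j) ↔ (∀ j, 0 < b j))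

/-!
An odd bijection between the arrangements is a signed permutation of indices, so the question is
when it preserves membership in open cones. Changing signs of the spanning vectors shows that cones
are preserved iff the coefficients of each vector in any `m` others have the same signs in both
configurations. By Cramer's rule, the sign of such a coefficient is the ratio of the orientations of
two `m`-tuples differing by the exchange of one entry. As any two tuples are connected by exchanges
and swaps, the coefficient signs determine the chirotope up to one global sign, and conversely.
-/

open Function SignType

section Signs

theorem sign_units_smul_inj {K : Type*} [AddCommGroup K] [LinearOrder K] [IsOrderedAddMonoid K]
    (s : ℤˣ) {x y : K} : sign (s • x) = sign (s • y) ↔ sign x = sign y := by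
  rcases Int.units_eq_one_or s with rfl | rfl <;> simp [Left.sign_neg]

theorem exists_units_smul_pos {K : Type*} [AddCommGroup K] [LinearOrder K] [IsOrderedAddMonoid K]
    {x : K} (hx : x ≠ 0) : ∃ s : ℤˣ, 0 < s • x := by
  rcases hx.lt_or_gt with h | h
  · exact ⟨-1, by simpa using h⟩
  · exact ⟨1, by simpa using h⟩

theorem units_int_eq_or_eq_neg (s s' : ℤˣ) : s = s' ∨ s = -s' := by
  decide +revert

theorem exists_forall_eq_one_or_neg_one_iff {ι R : Type*} [Ring R] {P : (ι → R) → Prop} :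
    (∃ ε : ι → R, (∀ i, ε i = 1 ∨ ε i = -1) ∧ P ε) ↔
      ∃ e : ι → ℤˣ, P fun i => ((e i : ℤ) : R) := by
  constructor
  · rintro ⟨ε, hε, hP⟩
    have hunit (i : ι) : ∃ s : ℤˣ, ((s : ℤ) : R) = ε i := by
      rcases hε i with h | h
      · exact ⟨1, by simp [h]⟩
      · exact ⟨-1, by simp [h]⟩
    choose e he using hunit
    exact ⟨e, by simpa only [he] using hP⟩
  · rintro ⟨e, hP⟩
    refine ⟨_, fun i => ?_, hP⟩
    rcases Int.units_eq_one_or (e i) with h | h <;> simp [h]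

theorem exists_eq_one_or_neg_one_iff {R : Type*} [Zero R] [One R] [Neg R] {P : R → Prop} :
    (∃ δ : R, (δ = 1 ∨ δ = -1) ∧ P δ) ↔ ∃ δ : SignType, δ ≠ 0 ∧ P (δ : R) := by
  constructor
  · rintro ⟨δ, rfl | rfl, hP⟩
    · exact ⟨1, by decide, by simpa using hP⟩
    · exact ⟨-1, by decide, by simpa using hP⟩
  · rintro ⟨δ, hδ, hP⟩
    rcases δ.trichotomy with rfl | rfl | rfl
    · exact ⟨_, by simp, hP⟩
    · exact absurd rfl hδ
    · exact ⟨_, by simp, hP⟩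

theorem signType_cast_injective {R : Type*} [AddGroupWithOne R] [CharZero R] :
    Injective (SignType.cast : SignType → R) := by
  intro a b h
  rw [← SignType.intCast_cast, ← SignType.intCast_cast b, Int.cast_inj] at h
  revert a b
  decide

theorem real_sign_eq_cast_sign (x : ℝ) : Real.sign x = (sign x : ℝ) := by
  rcases lt_trichotomy x 0 with h | rfl | h
  · simp [h, Real.sign_of_neg]
  · simp
  · simp [h, Real.sign_of_pos]

end Signs

theorem bijOn_extend_range {α β γ : Type*} {x : α → β} {y : α → γ} (hx : Injective x)
    (hy : Injective y) (d : β → γ) : Set.BijOn (extend x y d) (Set.range x) (Set.range y) := by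
  have h := (hx.extend_injOn hy (j := d)).bijOn_image
  rwa [← Set.range_comp, extend_comp hx] at h

section Tuples

variable {κ ι : Type*} [DecidableEq κ]

theorem injective_update_of_notMem_range {t : κ → ι} (ht : Injective t) (j : κ) {k : ι}
    (hk : k ∉ Set.range t) : Injective (update t j k) := by
  intro x y hxy
  simp only [update_apply] at hxy
  grind [ht.eq_iff]

theorem injective_exchange_induction [Finite κ] {Q : (κ → ι) → Prop}
    (hswap : ∀ t i j, Q t → Q (t ∘ Equiv.swap i j))
    (hexchange : ∀ t, Injective t → ∀ j, ∀ k ∉ Set.range t, Q t → Q (update t j k))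
    {t t' : κ → ι} (ht : Injective t) (ht' : Injective t') (hQ : Q t) : Q t' := by
  have := Fintype.ofFinite κ
  -- Entries are put in place one at a time: by a swap if `t' j` already occurs in the tuple,
  -- by an exchange otherwise.
  have agree (s : Finset κ) : ∃ u, Injective u ∧ Q u ∧ ∀ i ∈ s, u i = t' i := by
    induction s using Finset.induction_on with
    | empty => exact ⟨t, ht, hQ, by simp⟩
    | insert j s _ ih =>
      obtain ⟨u, hu, hQu, hus⟩ := ih
      by_cases hk : t' j ∈ Set.range u
      · obtain ⟨i, hi⟩ := hk
        refine ⟨u ∘ Equiv.swap i j, hu.comp (Equiv.injective _), hswap u i j hQu, fun l hl => ?_⟩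
        simp only [comp_apply, Equiv.swap_apply_def]
        grind [hu.eq_iff, ht'.eq_iff]
      · refine ⟨update u j (t' j), injective_update_of_notMem_range hu j hk,
          hexchange u hu j _ hk hQu, fun l hl => ?_⟩
        simp only [update_apply]
        grind
  obtain ⟨u, -, hQu, hu⟩ := agree Finset.univ
  rwa [← funext fun i => hu i (Finset.mem_univ i)]

theorem forall_injective_iff_forall_orderEmbOfFin {ι : Type*} [LinearOrder ι] {m : ℕ}
    {Q : (Fin m → ι) → Prop} (hQ : ∀ t (π : Equiv.Perm (Fin m)), Q (t ∘ π) ↔ Q t) :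
    (∀ t, Injective t → Q t) ↔ ∀ (I : Finset ι) (hI : I.card = m), Q (I.orderEmbOfFin hI) := by
  refine ⟨fun h I hI => h _ (I.orderEmbOfFin hI).injective, fun h t ht => ?_⟩
  have hI : (Finset.univ.image t).card = m := by simp [Finset.card_image_of_injective _ ht]
  have hsort : StrictMono (t ∘ Tuple.sort t) :=
    (Tuple.monotone_sort t).strictMono_of_injective (ht.comp (Tuple.sort t).injective)
  rw [← hQ t (Tuple.sort t), Finset.orderEmbOfFin_unique hI (by simp) hsort]
  exact h _ hI

end Tuples

section GeneralPosition

variable {K ι E : Type*} [Field K] [AddCommGroup E] [Module K E]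

variable (K) in
/-- A family of vectors is in general position (up to size `m`) if any at most `m` of its members,
with distinct indices, are linearly independent. -/
def InGeneralPosition (m : ℕ) (v : ι → E) : Prop :=
  ∀ I : Finset ι, I.card ≤ m → LinearIndepOn K v I

variable {m : ℕ} {v : ι → E}

theorem InGeneralPosition.mono {k : ℕ} (hv : InGeneralPosition K m v) (hkm : k ≤ m) :
    InGeneralPosition K k v :=
  fun I hI => hv I (hI.trans hkm)

theorem InGeneralPosition.linearIndependent_comp (hv : InGeneralPosition K m v) {t : Fin m → ι}
    (ht : Injective t) : LinearIndependent K (v ∘ t) := by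
  classical
  rw [← linearIndepOn_range_iff ht]
  simpa using hv (Finset.univ.image t) (by simp [Finset.card_image_of_injective _ ht])

theorem InGeneralPosition.smul_comp {α : Type*} (hv : InGeneralPosition K m v) {σ : α → ι}
    (hσ : Injective σ) (e : α → ℤˣ) : InGeneralPosition K m fun i => e i • v (σ i) := by
  classical
  intro I hI
  have hσI : LinearIndepOn K v (σ '' I) := by
    simpa using hv (I.image σ) (Finset.card_image_le.trans hI)
  exact (hσI.comp_of_image hσ.injOn).group_smul fun i => e i

end GeneralPosition

section SignedFamily

variable {ι E : Type*} [AddCommGroup E]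

/-- The antipodal family `±v i` of a family `v`, with the sign of a member recorded in `ℤˣ`, so that
`(i, s)` and `(i, -s)` index antipodal vectors. -/
def signedFamily (v : ι → E) (p : ι × ℤˣ) : E := p.2 • v p.1

theorem signedFamily_neg (v : ι → E) (i : ι) (s : ℤˣ) :
    signedFamily v (i, -s) = -signedFamily v (i, s) := by
  simp [signedFamily, Units.smul_def]

theorem signedFamily_smul_comp {α : Type*} (w : ι → E) (σ : α ≃ ι) (e : α → ℤˣ) :
    (signedFamily fun i => e i • w (σ i)) =
      signedFamily w ∘ σ.prodShear fun i => Equiv.mulRight (e i) := by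
  ext p
  simp [signedFamily, smul_smul]

theorem map_signedFamily {F : Type*} [AddCommGroup F] {v : ι → E} {f : E → F}
    (hodd : ∀ x ∈ Set.range (signedFamily v), f (-x) = -f x) (p : ι × ℤˣ) :
    f (signedFamily v p) = signedFamily (f ∘ v) p := by
  obtain ⟨i, s⟩ := p
  rcases Int.units_eq_one_or s with rfl | rfl
  · simp [signedFamily]
  · rw [signedFamily_neg, signedFamily_neg, hodd _ (Set.mem_range_self _)]
    simp [signedFamily]

theorem signedFamily_eq_sum_iff {K κ : Type*} [Ring K] [Module K E] [Fintype κ]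
    {v : ι → E} {p : ι × ℤˣ} {q : κ → ι × ℤˣ} {a : κ → K} :
    signedFamily v p = ∑ j, a j • signedFamily v (q j) ↔
      v p.1 = ∑ j, (p.2 • (q j).2 • a j) • v (q j).1 := by
  rw [signedFamily, smul_eq_iff_eq_inv_smul, Int.units_inv_eq_self, Finset.smul_sum]
  simp only [signedFamily, smul_assoc, smul_comm (a _)]

theorem InGeneralPosition.signedFamily_injective {K : Type*} [Field K] [CharZero K] [Module K E]
    {v : ι → E} (hv : InGeneralPosition K 2 v) : Injective (signedFamily v) := by
  classical
  rintro ⟨i, s⟩ ⟨k, s'⟩ h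
  have hK : ((s : ℤ) : K) • v i = ((s' : ℤ) : K) • v k := by
    simpa [signedFamily, Units.smul_def, Int.cast_smul_eq_zsmul] using h
  obtain rfl : i = k := by
    by_contra hik
    have hpair : LinearIndepOn K v {i, k} := by simpa using hv {i, k} Finset.card_le_two
    have hzero := (LinearIndepOn.pair_iff v hik).1 hpair (s : ℤ) (-(s' : ℤ)) (by simp [hK])
    exact (Int.cast_ne_zero (α := K)).2 s.ne_zero hzero.1
  have hvi : v i ≠ 0 := (hv {i} (by simp)).ne_zero (by simp)
  have hs : s = s' := by exact_mod_cast smul_left_injective K hvi hK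
  rw [hs]

theorem injective_fst_comp_iff {α : Type*} {v : ι → E} (hv : Injective (signedFamily v))
    (p : α → ι × ℤˣ) :
    Injective (Prod.fst ∘ p) ↔ Injective (signedFamily v ∘ p) ∧
      ∀ k l, signedFamily v (p k) ≠ -signedFamily v (p l) := by
  have hneg (k l : α) : signedFamily v (p k) = -signedFamily v (p l) ↔
      (p k).1 = (p l).1 ∧ (p k).2 = -(p l).2 := by
    rw [← signedFamily_neg v (p l).1 (p l).2, hv.eq_iff, Prod.ext_iff]
  simp only [ne_eq, hneg, hv.of_comp_iff]
  constructor
  · refine fun hp => ⟨hp.of_comp, fun k l ⟨hfst, hsnd⟩ => ?_⟩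
    obtain rfl : k = l := hp hfst
    exact units_ne_neg_self _ hsnd
  · rintro ⟨hp, hne⟩ k l hkl
    have hsnd := (units_int_eq_or_eq_neg (p k).2 (p l).2).resolve_right fun h => hne k l ⟨hkl, h⟩
    exact hp (Prod.ext hkl hsnd)

theorem exists_perm_of_bijOn_signedFamily [Finite ι] {v w : ι → E} {f : E → E}
    (hv : Injective (signedFamily v))
    (hf : Set.BijOn f (Set.range (signedFamily v)) (Set.range (signedFamily w)))
    (hodd : ∀ x ∈ Set.range (signedFamily v), f (-x) = -f x) :
    ∃ (σ : Equiv.Perm ι) (e : ι → ℤˣ), f ∘ v = fun i => e i • w (σ i) := by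
  choose q hq using fun i => hf.mapsTo (Set.mem_range_self (f := signedFamily v) (i, 1))
  have hfv : f ∘ v = fun i => (q i).2 • w (q i).1 := by
    ext i
    simpa [signedFamily] using (hq i).symm
  have hinj : Injective fun i => (q i).1 := by
    intro i k (hik : (q i).1 = (q k).1)
    have heq : f (signedFamily v (i, (q i).2)) = f (signedFamily v (k, (q k).2)) := by
      rw [map_signedFamily hodd, map_signedFamily hodd, hfv]
      simp [signedFamily, smul_smul, hik]
    exact congrArg Prod.fst (hv (hf.injOn (Set.mem_range_self _) (Set.mem_range_self _) heq))
  exact ⟨Equiv.ofBijective _ (Finite.injective_iff_bijective.1 hinj), fun i => (q i).2, hfv⟩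

end SignedFamily

section Chirotope

variable {K ι : Type*} [Field K] [LinearOrder K] {m : ℕ} {v w : ι → Fin m → K}

/-- The chirotope of a vector configuration: the orientation (sign of the determinant) of each
`m`-tuple of its members. The vectors are the rows of the determinant, and tuples with repeated
indices have orientation `0`. -/
def chirotope (v : ι → Fin m → K) (t : Fin m → ι) : SignType :=
  sign (Matrix.of (v ∘ t)).det

/-- Two configurations have the same dependency signs if, whenever one member is expanded in `m`
others, its coefficients have the same signs in both configurations. -/
def SameDependencySigns (v w : ι → Fin m → K) : Prop :=
  ∀ t : Fin m → ι, Injective t → ∀ k ∉ Set.range t, ∀ a b : Fin m → K,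
    v k = ∑ j, a j • v (t j) → w k = ∑ j, b j • w (t j) → ∀ j, sign (a j) = sign (b j)

theorem chirotope_ne_zero_iff {t : Fin m → ι} :
    chirotope v t ≠ 0 ↔ LinearIndependent K (v ∘ t) := by
  rw [chirotope, sign_ne_zero, ← isUnit_iff_ne_zero, ← Matrix.isUnit_iff_isUnit_det,
    ← Matrix.linearIndependent_rows_iff_isUnit]
  rfl

theorem InGeneralPosition.chirotope_ne_zero (hv : InGeneralPosition K m v) {t : Fin m → ι}
    (ht : Injective t) : chirotope v t ≠ 0 :=
  chirotope_ne_zero_iff.2 (hv.linearIndependent_comp ht)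

theorem exists_eq_sum_of_chirotope_ne_zero {t : Fin m → ι} (h : chirotope v t ≠ 0)
    (x : Fin m → K) : ∃ a : Fin m → K, x = ∑ j, a j • v (t j) := by
  have hspan := (chirotope_ne_zero_iff.1 h).span_eq_top_of_card_eq_finrank' (by simp)
  have hx : x ∈ Submodule.span K (Set.range (v ∘ t)) := hspan ▸ Submodule.mem_top
  obtain ⟨a, ha⟩ := (Submodule.mem_span_range_iff_exists_fun K).1 hx
  exact ⟨a, ha.symm⟩

variable [IsStrictOrderedRing K]

theorem chirotope_comp_perm (v : ι → Fin m → K) (t : Fin m → ι) (π : Equiv.Perm (Fin m)) :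
    chirotope v (t ∘ π) = sign (Equiv.Perm.sign π : ℤ) * chirotope v t := by
  have hdet : (Matrix.of (v ∘ t ∘ π)).det = (Equiv.Perm.sign π : ℤ) * (Matrix.of (v ∘ t)).det :=
    Matrix.det_permute π (Matrix.of (v ∘ t))
  rw [chirotope, hdet, sign_mul, sign_intCast, chirotope]

theorem chirotope_comp_perm_eq_iff (δ : SignType) (t : Fin m → ι) (π : Equiv.Perm (Fin m)) :
    chirotope v (t ∘ π) = δ * chirotope w (t ∘ π) ↔ chirotope v t = δ * chirotope w t := by
  rw [chirotope_comp_perm, chirotope_comp_perm, mul_left_comm δ]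
  exact mul_right_inj' (sign_ne_zero.2 (Equiv.Perm.sign π).ne_zero)

theorem chirotope_update {t : Fin m → ι} {k : ι} {a : Fin m → K}
    (ha : v k = ∑ j, a j • v (t j)) (j : Fin m) :
    chirotope v (update t j k) = sign (a j) * chirotope v t := by
  have hrow : Matrix.of (v ∘ update t j k) = (Matrix.of (v ∘ t)).updateRow j (v k) :=
    comp_update v t j k
  have hdet : ((Matrix.of (v ∘ t)).updateRow j (∑ l, a l • v (t l))).det =
      a j * (Matrix.of (v ∘ t)).det :=
    Matrix.det_updateRow_sum (Matrix.of (v ∘ t)) j a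
  rw [chirotope, hrow, ha, hdet, sign_mul, chirotope]

theorem InGeneralPosition.coeff_ne_zero (hv : InGeneralPosition K m v) {t : Fin m → ι}
    (ht : Injective t) {k : ι} (hk : k ∉ Set.range t) {a : Fin m → K}
    (ha : v k = ∑ j, a j • v (t j)) (j : Fin m) : a j ≠ 0 := by
  have hne := hv.chirotope_ne_zero (injective_update_of_notMem_range ht j hk)
  rw [chirotope_update ha] at hne
  exact sign_ne_zero.1 (left_ne_zero_of_mul hne)

theorem SameDependencySigns.exists_chirotope_eq (h : SameDependencySigns v w)
    (hv : InGeneralPosition K m v) (hw : InGeneralPosition K m w) {t₀ : Fin m → ι}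
    (ht₀ : Injective t₀) :
    ∃ δ : SignType, δ ≠ 0 ∧ ∀ t, Injective t → chirotope v t = δ * chirotope w t := by
  have hw₀ := hw.chirotope_ne_zero ht₀
  refine ⟨chirotope v t₀ / chirotope w t₀, div_ne_zero (hv.chirotope_ne_zero ht₀) hw₀,
    fun t ht => ?_⟩
  refine injective_exchange_induction
    (Q := fun t => chirotope v t = chirotope v t₀ / chirotope w t₀ * chirotope w t)
    (fun t i j => (chirotope_comp_perm_eq_iff _ t _).2) ?_ ht₀ ht (div_mul_cancel₀ _ hw₀).symm
  intro t ht j k hk hQ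
  obtain ⟨a, ha⟩ := exists_eq_sum_of_chirotope_ne_zero (hv.chirotope_ne_zero ht) (v k)
  obtain ⟨b, hb⟩ := exists_eq_sum_of_chirotope_ne_zero (hw.chirotope_ne_zero ht) (w k)
  rw [chirotope_update ha, chirotope_update hb, h t ht k hk a b ha hb j, hQ, mul_left_comm]

theorem sameDependencySigns_of_chirotope_eq (hv : InGeneralPosition K m v) {δ : SignType}
    (h : ∀ t, Injective t → chirotope v t = δ * chirotope w t) : SameDependencySigns v w := by
  intro t ht k hk a b ha hb j
  have hupd := h _ (injective_update_of_notMem_range ht j hk)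
  rw [chirotope_update ha, chirotope_update hb, mul_left_comm, ← h t ht] at hupd
  exact mul_right_cancel₀ (hv.chirotope_ne_zero ht) hupd

theorem sameDependencySigns_iff_exists_chirotope_eq (hv : InGeneralPosition K m v)
    (hw : InGeneralPosition K m w) {t₀ : Fin m → ι} (ht₀ : Injective t₀) :
    SameDependencySigns v w ↔
      ∃ δ : SignType, δ ≠ 0 ∧ ∀ t, Injective t → chirotope v t = δ * chirotope w t :=
  ⟨fun h => h.exists_chirotope_eq hv hw ht₀,
    fun ⟨_, _, h⟩ => sameDependencySigns_of_chirotope_eq hv h⟩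

end Chirotope

section Arrangement

variable {ι : Type*} {m : ℕ} {v w : ι → Fin m → ℝ} {f : (Fin m → ℝ) → Fin m → ℝ}

/-- A map preserves open cones on `S` if it preserves and reflects membership of a point of `S` in
the open simplicial cone spanned by `m` others, no two of these points being antipodal: the
combinatorial clause of `AntipodalIso`. As there, coefficients are quantified universally. -/
def PreservesOpenCones (S : Set (Fin m → ℝ)) (f : (Fin m → ℝ) → Fin m → ℝ) : Prop :=
  ∀ c : Fin (m + 1) → (Fin m → ℝ), Injective c → (∀ k, c k ∈ S) → (∀ k l, c k ≠ -c l) →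
    ∀ a b : Fin m → ℝ,
      c (Fin.last m) = ∑ j : Fin m, a j • c j.castSucc →
      f (c (Fin.last m)) = ∑ j : Fin m, b j • f (c j.castSucc) →
      ((∀ j, 0 < a j) ↔ (∀ j, 0 < b j))

theorem PreservesOpenCones.sameDependencySigns (hv : InGeneralPosition ℝ m v)
    (hinj : Injective (signedFamily v))
    (hodd : ∀ x ∈ Set.range (signedFamily v), f (-x) = -f x)
    (hf : PreservesOpenCones (Set.range (signedFamily v)) f) :
    SameDependencySigns v (f ∘ v) := by
  intro t ht k hk a b ha hb j
  -- Replacing `v (t l)` by `s l • v (t l)` moves `v k` into the open cone.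
  choose s hs using fun l => exists_units_smul_pos (hv.coeff_ne_zero ht hk ha l)
  let p : Fin (m + 1) → ι × ℤˣ := Fin.snoc (fun l => (t l, s l)) (k, 1)
  have hp : Injective (Prod.fst ∘ p) := by
    rw [Fin.comp_snoc]
    exact Fin.snoc_injective_iff.2 ⟨ht, hk⟩
  obtain ⟨hc, hne⟩ := (injective_fst_comp_iff hinj p).1 hp
  have hcone := hf (signedFamily v ∘ p) hc (fun _ => Set.mem_range_self _) hne
    (fun l => s l • a l) (fun l => s l • b l)
    (signedFamily_eq_sum_iff.2 (by simpa [p, smul_smul] using ha))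
    (by
      simp only [comp_apply, map_signedFamily hodd]
      exact signedFamily_eq_sum_iff.2 (by simpa [p, smul_smul] using hb))
  rw [← sign_units_smul_inj (s j), sign_pos (hs j), sign_pos (hcone.1 hs j)]

theorem SameDependencySigns.preservesOpenCones (hinj : Injective (signedFamily v))
    (hodd : ∀ x ∈ Set.range (signedFamily v), f (-x) = -f x)
    (h : SameDependencySigns v (f ∘ v)) :
    PreservesOpenCones (Set.range (signedFamily v)) f := by
  intro c hc hcS hne a b ha hb
  choose p hp using hcS
  obtain rfl : signedFamily v ∘ p = c := funext hp
  have hfst := (injective_fst_comp_iff hinj p).2 ⟨hc, hne⟩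
  simp only [comp_apply, map_signedFamily hodd] at ha hb
  have hlast : (p (Fin.last m)).1 ∉ Set.range fun j : Fin m => (p j.castSucc).1 := by
    rintro ⟨j, hj⟩
    exact j.castSucc_ne_last (hfst hj)
  have hsign := h _ (hfst.comp (Fin.castSucc_injective m)) _ hlast _ _
    (signedFamily_eq_sum_iff.1 ha) (signedFamily_eq_sum_iff.1 hb)
  simp only [sign_units_smul_inj] at hsign
  simp only [← sign_eq_one_iff, hsign]

theorem SameDependencySigns.antipodalIso (hv : Injective (signedFamily v))
    (hw : Injective (signedFamily w)) (h : SameDependencySigns v w) :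
    AntipodalIso m (Set.range (signedFamily v)) (Set.range (signedFamily w)) := by
  have hf := hv.extend_apply (signedFamily w) 0
  have hodd : ∀ x ∈ Set.range (signedFamily v),
      extend (signedFamily v) (signedFamily w) 0 (-x) =
        -extend (signedFamily v) (signedFamily w) 0 x := by
    rintro _ ⟨⟨i, s⟩, rfl⟩
    rw [← signedFamily_neg, hf, hf, signedFamily_neg]
  have hfv : extend (signedFamily v) (signedFamily w) 0 ∘ v = w := by
    ext1 i
    simpa [signedFamily] using hf (i, 1)
  exact ⟨_, bijOn_extend_range hv hw 0, hodd, (hfv.symm ▸ h).preservesOpenCones hv hodd⟩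

theorem antipodalIso_range_signedFamily_iff [Finite ι] (hv : InGeneralPosition ℝ m v)
    (hvinj : Injective (signedFamily v)) (hwinj : Injective (signedFamily w)) :
    AntipodalIso m (Set.range (signedFamily v)) (Set.range (signedFamily w)) ↔
      ∃ (σ : Equiv.Perm ι) (e : ι → ℤˣ), SameDependencySigns v fun i => e i • w (σ i) := by
  constructor
  · rintro ⟨f, hf, hodd, hcone⟩
    obtain ⟨σ, e, hfv⟩ := exists_perm_of_bijOn_signedFamily hvinj hf hodd
    exact ⟨σ, e, hfv ▸ PreservesOpenCones.sameDependencySigns hv hvinj hodd hcone⟩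
  · rintro ⟨σ, e, h⟩
    have hcomp := signedFamily_smul_comp w σ e
    have hiso := h.antipodalIso hvinj (hcomp ▸ hwinj.comp (Equiv.injective _))
    rwa [hcomp, EquivLike.range_comp] at hiso

end Arrangement

section Matrix

variable {m n : ℕ}

theorem antipodalSet_eq_range_signedFamily (M : Matrix (Fin m) (Fin n) ℝ) :
    antipodalSet M = Set.range (signedFamily M.col) := by
  ext x
  constructor
  · rintro (⟨i, rfl⟩ | ⟨i, rfl⟩)
    · exact ⟨(i, 1), by ext; simp [signedFamily]⟩
    · exact ⟨(i, -1), by ext; simp [signedFamily, Units.smul_def]⟩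
  · rintro ⟨⟨i, s⟩, rfl⟩
    rcases Int.units_eq_one_or s with rfl | rfl
    · exact Or.inl ⟨i, by ext; simp [signedFamily]⟩
    · exact Or.inr ⟨i, by ext; simp [signedFamily, Units.smul_def]⟩

theorem sign_maxMinor (M : Matrix (Fin m) (Fin n) ℝ) (I : Finset (Fin n)) (hI : I.card = m) :
    sign (maxMinor M I hI) = chirotope M.col (I.orderEmbOfFin hI) := by
  rw [maxMinor, ← Matrix.det_transpose]
  rfl

theorem TNZMat.inGeneralPosition {M : Matrix (Fin m) (Fin n) ℝ} (hM : TNZMat M) (hmn : m ≤ n) :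
    InGeneralPosition ℝ m M.col := by
  intro I hI
  obtain ⟨J, hIJ, hJ⟩ := Finset.exists_superset_card_eq hI (by simpa using hmn)
  have hne : chirotope M.col (J.orderEmbOfFin hJ) ≠ 0 :=
    sign_maxMinor M J hJ ▸ sign_ne_zero.2 (hM J hJ)
  have hJindep := (linearIndepOn_range_iff (J.orderEmbOfFin hJ).injective _).2
    (chirotope_ne_zero_iff.1 hne)
  rw [Finset.range_orderEmbOfFin] at hJindep
  exact hJindep.mono (Finset.coe_subset.2 hIJ)

theorem exists_forall_sign_maxMinor_eq_iff (M N : Matrix (Fin m) (Fin n) ℝ) :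
    (∃ δ : ℝ, (δ = 1 ∨ δ = -1) ∧ ∀ (I : Finset (Fin n)) (hI : I.card = m),
      Real.sign (maxMinor M I hI) = δ * Real.sign (maxMinor N I hI)) ↔
    ∃ δ : SignType, δ ≠ 0 ∧ ∀ t, Injective t → chirotope M.col t = δ * chirotope N.col t := by
  simp only [exists_eq_one_or_neg_one_iff, real_sign_eq_cast_sign, sign_maxMinor,
    ← SignType.coe_mul, signType_cast_injective.eq_iff]
  exact exists_congr fun δ => and_congr_right fun _ =>
    (forall_injective_iff_forall_orderEmbOfFin
      (Q := fun t => chirotope M.col t = δ * chirotope N.col t)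
      (chirotope_comp_perm_eq_iff δ)).symm

end Matrix

/-- for `M, N ∈ Mat^{tnz}_{mn}(ℝ)` with `n ≥ m ≥ 2`, the antipodal arrangements
`{±v_i}` and `{±w_i}` are isomorphic iff there are a permutation `σ`, columnwise signs `ε`,
and a global sign `δ` such that all maximal minors of `M` and of `N'` (the matrix with `i`-th
column `ε i • w (σ i)`) have matching signs up to `δ`. -/
theorem stmt_7 (m n : ℕ) (hm : 2 ≤ m) (hmn : m ≤ n)
    (M N : Matrix (Fin m) (Fin n) ℝ) (hM : TNZMat M) (hN : TNZMat N) :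
    AntipodalIso m (antipodalSet M) (antipodalSet N) ↔
      ∃ σ : Equiv.Perm (Fin n), ∃ ε : Fin n → ℝ, (∀ i, ε i = 1 ∨ ε i = -1) ∧
        ∃ δ : ℝ, (δ = 1 ∨ δ = -1) ∧
          ∀ (I : Finset (Fin n)) (hI : I.card = m),
            Real.sign (maxMinor M I hI) =
              δ * Real.sign (maxMinor (Matrix.of fun k i => ε i * N k (σ i)) I hI) := by
  have hv := hM.inGeneralPosition hmn
  have hw := hN.inGeneralPosition hmn
  rw [antipodalSet_eq_range_signedFamily, antipodalSet_eq_range_signedFamily,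
    antipodalIso_range_signedFamily_iff hv (hv.mono hm).signedFamily_injective
      (hw.mono hm).signedFamily_injective]
  refine exists_congr fun σ => ?_
  rw [exists_forall_eq_one_or_neg_one_iff]
  refine exists_congr fun e => ?_
  have hcol : (Matrix.of fun k i => ((e i : ℤ) : ℝ) * N k (σ i)).col =
      fun i => e i • N.col (σ i) := by
    ext i k
    simp [Units.smul_def]
  rw [exists_forall_sign_maxMinor_eq_iff, hcol]
  exact sameDependencySigns_iff_exists_chirotope_eq hv (hw.smul_comp σ.injective e)
    (Fin.castLE_injective hmn)
end

section
/- Let n ≥ 1 and write n = 2^l·m with m odd, l ≥ 0. For each integer i with 0 ≤ i ≤ 2n−1, the number of d ∈ {1,−1}^n with ζ^i(d) = d equals: 2^n if i = 0; 2^{gcd(i,n)} if i ≠ 0 and 2^{l+1} divides i; and 0 otherwise (i.e., if i ≠ 0 and 2^{l+1} does not divide i). -/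
/-- The signed cyclic shift `ζ` on `{±1}^n`: `(ζ d)_0 = -d_{n-1}` and `(ζ d)_k = d_{k-1}`
for `k ≥ 1` (0-based indexing). -/
def zeta (n : ℕ) (d : Fin n → ℤˣ) : Fin n → ℤˣ := fun k =>
  if (k : ℕ) = 0 then -d ⟨n - 1, Nat.sub_lt k.pos Nat.one_pos⟩
  else d ⟨(k : ℕ) - 1, Nat.lt_of_le_of_lt (Nat.sub_le _ _) k.isLt⟩

/-!
A word `d : Fin n → ℤˣ` extends uniquely to a function `f : ℤ → ℤˣ` with `f (x + n) = -f x`, and the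
sign in `ζ` is exactly what makes `ζ` act on such extensions as the translation `f ↦ f (· - 1)`.
Fixed points of `ζ^i` are therefore the functions with antiperiod `n` and period `i`. Put
`g = gcd i n`. If `i / g` is even, then `n / g` is odd, so by Bézout these are the functions with
antiperiod `g`, of which there are `2 ^ g`. If `i / g` is odd, then `(i / g) * n = (n / g) * i` is
both an antiperiod and a period, and there are none. For `n = 2 ^ l * m` with `m` odd, `i / g` is
even exactly when `i` has more factors `2` than `n`, that is, when `2 ^ (l + 1) ∣ i`.
-/

section Antiperiodic

open Function

variable {α β : Type*} [InvolutiveNeg β]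

section AddGroup

variable [AddGroup α] {f : α → β} {c : α} {a b : ℤ}

theorem periodic_zsmul_of_even (hf : Antiperiodic f c) (ha : Even a) : Periodic f (a • c) := by
  obtain ⟨k, rfl⟩ := even_iff_exists_two_mul.1 ha
  exact hf.even_zsmul_periodic k

theorem antiperiodic_zsmul_of_odd (hf : Antiperiodic f c) (ha : Odd a) :
    Antiperiodic f (a • c) := by
  obtain ⟨k, rfl⟩ := ha
  exact hf.odd_zsmul_antiperiodic k

theorem antiperiodic_zsmul_and_periodic_zsmul_iff (hab : IsCoprime a b) (hb : Even b) :
    Antiperiodic f (a • c) ∧ Periodic f (b • c) ↔ Antiperiodic f c := by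
  obtain ⟨u, v, huv⟩ := hab
  have hua : Odd (u * a) := by
    rw [← Int.not_even_iff_odd]
    intro h
    exact Int.not_even_one (huv ▸ h.add (hb.mul_left v))
  constructor
  · rintro ⟨ha, hp⟩
    have hanti : Antiperiodic f (u • a • c) := antiperiodic_zsmul_of_odd ha (Int.odd_mul.1 hua).1
    have hsum : v • b • c + u • a • c = c := by
      rw [smul_smul, smul_smul, ← add_zsmul, add_comm, huv, one_zsmul]
    exact hsum ▸ (hp.zsmul v).add_antiperiod hanti
  · intro h
    exact ⟨antiperiodic_zsmul_of_odd h (Int.odd_mul.1 hua).2, periodic_zsmul_of_even h hb⟩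

theorem not_periodic_zsmul_of_antiperiodic_zsmul (hneg : ∀ y : β, -y ≠ y)
    (hf : Antiperiodic f (a • c)) (hb : Odd b) : ¬ Periodic f (b • c) := by
  intro hp
  have hanti : Antiperiodic f (b • a • c) := antiperiodic_zsmul_of_odd hf hb
  have hperi : Periodic f (b • a • c) := by
    rw [smul_comm]
    exact hp.zsmul a
  exact hneg (f 0) ((hanti 0).symm.trans (hperi 0))

end AddGroup

/-- The extension of a word `d` of length `n` to a function on `ℤ` with antiperiod `n`. -/
def antiperiodicExtend {n : ℕ} [NeZero n] (d : Fin n → β) (x : ℤ) : β :=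
  if Even (Int.divModEquiv n x).1 then d (Int.divModEquiv n x).2 else -d (Int.divModEquiv n x).2

theorem antiperiodicExtend_mul_add {n : ℕ} [NeZero n] (d : Fin n → β) (q : ℤ) (r : Fin n) :
    antiperiodicExtend d (q * n + (r : ℕ)) = if Even q then d r else -d r := by
  have h : Int.divModEquiv n (q * n + (r : ℕ)) = (q, r) :=
    (Int.divModEquiv n).apply_symm_apply (q, r)
  rw [antiperiodicExtend, h]

theorem exists_eq_mul_add_fin (n : ℕ) [NeZero n] (x : ℤ) :
    ∃ (q : ℤ) (r : Fin n), x = q * n + (r : ℕ) :=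
  ⟨_, _, ((Int.divModEquiv n).symm_apply_apply x).symm⟩

theorem antiperiodic_antiperiodicExtend {n : ℕ} [NeZero n] (d : Fin n → β) :
    Antiperiodic (antiperiodicExtend d) (n : ℤ) := by
  intro x
  obtain ⟨q, r, rfl⟩ := exists_eq_mul_add_fin n x
  have hshift : q * n + (r : ℕ) + (n : ℤ) = (q + 1) * n + (r : ℕ) := by ring
  rw [hshift, antiperiodicExtend_mul_add, antiperiodicExtend_mul_add]
  by_cases hq : Even q <;> simp [hq]

theorem eq_of_antiperiodic_of_eqOn_fin {n : ℕ} [NeZero n] {f g : ℤ → β}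
    (hf : Antiperiodic f (n : ℤ)) (hg : Antiperiodic g (n : ℤ))
    (hfg : ∀ k : Fin n, f (k : ℕ) = g (k : ℕ)) : f = g := by
  funext x
  obtain ⟨q, r, rfl⟩ := exists_eq_mul_add_fin n x
  rw [add_comm, ← smul_eq_mul]
  rcases Int.even_or_odd q with hq | hq
  · rw [periodic_zsmul_of_even hf hq, periodic_zsmul_of_even hg hq, hfg]
  · rw [antiperiodic_zsmul_of_odd hf hq, antiperiodic_zsmul_of_odd hg hq, hfg]

/-- Functions on `ℤ` with antiperiod `n` correspond to words of length `n`, by restriction to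
`{0, …, n - 1}`. -/
def antiperiodicEquiv (n : ℕ) [NeZero n] (β : Type*) [InvolutiveNeg β] :
    {f : ℤ → β // Antiperiodic f (n : ℤ)} ≃ (Fin n → β) where
  toFun f k := f.1 (k : ℕ)
  invFun d := ⟨antiperiodicExtend d, antiperiodic_antiperiodicExtend d⟩
  left_inv f := Subtype.ext <|
    eq_of_antiperiodic_of_eqOn_fin (antiperiodic_antiperiodicExtend fun k => f.1 (k : ℕ))
      f.2 fun k => by
    simpa using antiperiodicExtend_mul_add (fun k : Fin n => f.1 (k : ℕ)) 0 k
  right_inv d := by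
    funext k
    simpa using antiperiodicExtend_mul_add d 0 k

theorem card_antiperiodic (n : ℕ) [NeZero n] :
    Nat.card {f : ℤ → β // Antiperiodic f (n : ℤ)} = Nat.card β ^ n := by
  rw [Nat.card_congr (antiperiodicEquiv n β), Nat.card_fun, Nat.card_fin]

theorem card_antiperiodic_and_periodic (n i : ℕ) [NeZero n] (hneg : ∀ y : β, -y ≠ y) :
    Nat.card {f : ℤ → β // Antiperiodic f (n : ℤ) ∧ Periodic f (i : ℤ)} =
      if Even (i / i.gcd n) then Nat.card β ^ i.gcd n else 0 := by
  have hg : 0 < i.gcd n := Nat.gcd_pos_of_pos_right i (NeZero.pos n)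
  obtain ⟨b, a, hba, hi, hn⟩ := Nat.exists_coprime i n
  have hdiv : i / i.gcd n = b := Nat.div_eq_of_eq_mul_left hg hi
  have hnz : (n : ℤ) = (a : ℤ) • (i.gcd n : ℤ) := by rw [smul_eq_mul]; exact_mod_cast hn
  have hiz : (i : ℤ) = (b : ℤ) • (i.gcd n : ℤ) := by rw [smul_eq_mul]; exact_mod_cast hi
  rw [hdiv]
  split_ifs with hb
  · have hiff (f : ℤ → β) :
        Antiperiodic f (n : ℤ) ∧ Periodic f (i : ℤ) ↔ Antiperiodic f (i.gcd n : ℤ) := by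
      rw [hnz, hiz]
      exact antiperiodic_zsmul_and_periodic_zsmul_iff (Nat.isCoprime_iff_coprime.2 hba.symm)
        ((Int.even_coe_nat b).2 hb)
    have : NeZero (i.gcd n) := ⟨hg.ne'⟩
    rw [Nat.card_congr (Equiv.subtypeEquivRight hiff), card_antiperiodic]
  · have hempty (f : ℤ → β) : ¬ (Antiperiodic f (n : ℤ) ∧ Periodic f (i : ℤ)) := by
      rw [hnz, hiz]
      rintro ⟨hanti, hperi⟩
      exact not_periodic_zsmul_of_antiperiodic_zsmul hneg hanti
        ((Int.odd_coe_nat b).2 (Nat.not_even_iff_odd.1 hb)) hperi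
    have := Subtype.isEmpty_of_false hempty
    exact Nat.card_of_isEmpty

end Antiperiodic

section FixedPoints

open Function

variable {n : ℕ} {f : ℤ → ℤˣ}

theorem zeta_restrict_of_antiperiodic (hf : Antiperiodic f (n : ℤ)) :
    zeta n (fun k => f (k : ℕ)) = fun k : Fin n => f ((k : ℕ) - 1) := by
  funext k
  by_cases hk : (k : ℕ) = 0
  · have hlast : ((n - 1 : ℕ) : ℤ) = -1 + n := by omega
    simp [zeta, hk, hlast, hf (-1)]
  · have hpred : (((k : ℕ) - 1 : ℕ) : ℤ) = (k : ℕ) - 1 := by omega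
    simp [zeta, hk, hpred]

theorem iterate_zeta_restrict_of_antiperiodic (hf : Antiperiodic f (n : ℤ)) (i : ℕ) :
    (zeta n)^[i] (fun k => f (k : ℕ)) = fun k : Fin n => f ((k : ℕ) - i) := by
  induction i with
  | zero => simp
  | succ i ih =>
    rw [iterate_succ_apply', ih, zeta_restrict_of_antiperiodic (hf.sub_const (i : ℤ))]
    simp only [sub_sub, Nat.cast_succ, add_comm]

theorem iterate_zeta_restrict_eq_self_iff [NeZero n] (hf : Antiperiodic f (n : ℤ)) (i : ℕ) :
    (zeta n)^[i] (fun k => f (k : ℕ)) = (fun k : Fin n => f (k : ℕ)) ↔ Periodic f (i : ℤ) := by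
  rw [iterate_zeta_restrict_of_antiperiodic hf]
  constructor
  · intro h x
    have htrans : (fun x => f (x - i)) = f :=
      eq_of_antiperiodic_of_eqOn_fin (hf.sub_const (i : ℤ)) hf (congrFun h)
    simpa using (congrFun htrans (x + i)).symm
  · intro h
    funext k
    exact h.sub_eq _

theorem card_iterate_zeta_eq_self_eq_card_antiperiodic_and_periodic (n : ℕ) [NeZero n] (i : ℕ) :
    Nat.card {d : Fin n → ℤˣ // (zeta n)^[i] d = d} =
      Nat.card {f : ℤ → ℤˣ // Antiperiodic f (n : ℤ) ∧ Periodic f (i : ℤ)} :=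
  Nat.card_congr <|
    ((antiperiodicEquiv n ℤˣ).subtypeEquiv fun f =>
      (iterate_zeta_restrict_eq_self_iff f.2 i).symm).symm.trans
    (Equiv.subtypeSubtypeEquivSubtypeInter _ _)

theorem card_iterate_zeta_eq_self (n : ℕ) [NeZero n] (i : ℕ) :
    Nat.card {d : Fin n → ℤˣ // (zeta n)^[i] d = d} =
      if Even (i / i.gcd n) then 2 ^ i.gcd n else 0 := by
  rw [card_iterate_zeta_eq_self_eq_card_antiperiodic_and_periodic,
    card_antiperiodic_and_periodic n i neg_units_ne_self, Nat.card_eq_fintype_card,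
    Fintype.card_units_int]

end FixedPoints

theorem even_div_gcd_iff_two_pow_dvd {l m : ℕ} (hm : Odd m) (i : ℕ) :
    Even (i / i.gcd (2 ^ l * m)) ↔ 2 ^ (l + 1) ∣ i := by
  have hn : 0 < 2 ^ l * m := mul_pos (by positivity) hm.pos
  obtain ⟨b, a, hba, hi, ha⟩ := Nat.exists_coprime i (2 ^ l * m)
  rw [Nat.div_eq_of_eq_mul_left (Nat.gcd_pos_of_pos_right i hn) hi]
  have hgn := Nat.gcd_dvd_right i (2 ^ l * m)
  set g := i.gcd (2 ^ l * m)
  constructor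
  · intro hb
    have h2a : Nat.Coprime 2 a := hba.coprime_dvd_left hb.two_dvd
    have hg : 2 ^ l ∣ g := (h2a.pow_left l).dvd_of_dvd_mul_left (ha ▸ dvd_mul_right _ _)
    rw [hi, pow_succ']
    exact mul_dvd_mul hb.two_dvd hg
  · intro hdvd
    by_contra hb
    have h2b : Nat.Coprime 2 b := (Nat.not_even_iff_odd.1 hb).coprime_two_left
    have hg : 2 ^ (l + 1) ∣ g := (h2b.pow_left (l + 1)).dvd_of_dvd_mul_left (hi ▸ hdvd)
    have h2m : 2 ∣ m := (mul_dvd_mul_iff_left (by positivity)).1 (pow_succ 2 l ▸ hg.trans hgn)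
    exact hm.not_two_dvd_nat h2m

theorem stmt_8_general {n l m : ℕ} (hm : Odd m) (hnlm : n = 2 ^ l * m) (i : ℕ) :
    Nat.card {d : Fin n → ℤˣ // (zeta n)^[i] d = d} =
      if 2 ^ (l + 1) ∣ i then 2 ^ i.gcd n else 0 := by
  subst hnlm
  have : NeZero (2 ^ l * m) := ⟨mul_ne_zero (by positivity) hm.pos.ne'⟩
  simp only [card_iterate_zeta_eq_self, even_div_gcd_iff_two_pow_dvd hm]

/-- write `n = 2^l·m` with `m` odd. For `0 ≤ i ≤ 2n-1`, the number of fixed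
points of `ζ^i` on `{±1}^n` is `2^n` if `i = 0`; `2^gcd(i,n)` if `i ≠ 0` and `2^(l+1) ∣ i`;
and `0` otherwise. -/
theorem stmt_8 (n l m : ℕ) (hn : 1 ≤ n) (hm : Odd m) (hnlm : n = 2 ^ l * m)
    (i : ℕ) (hi : i ≤ 2 * n - 1) :
    (i = 0 → Nat.card {d : Fin n → ℤˣ // (zeta n)^[i] d = d} = 2 ^ n) ∧
    (i ≠ 0 → 2 ^ (l + 1) ∣ i →
      Nat.card {d : Fin n → ℤˣ // (zeta n)^[i] d = d} = 2 ^ Nat.gcd i n) ∧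
    (i ≠ 0 → ¬ 2 ^ (l + 1) ∣ i →
      Nat.card {d : Fin n → ℤˣ // (zeta n)^[i] d = d} = 0) := by
  have hcard := stmt_8_general hm hnlm i
  exact ⟨by rintro rfl; simp, fun _ h => hcard.trans (if_pos h), fun _ h => hcard.trans (if_neg h)⟩
end
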